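/- (Inequality (2.8)) Let A = (a_{ijk}) ∈ ℝ^{n×n×n} be a piezoelectric-type tensor, λ a C-eigenvalue of A with associated left and right C-eigenvectors x and y, S ⊆ N any subset, and let p, q ∈ N be indices with |x_p| = max_{i∈N} |x_i| and |y_q| = max_{i∈N} |y_i|. Then |λ| · (|λ| − R_q^{Δ_S,(3)}(A)) ≤ R_p^{(1)}(A) · R_q^{Δ̄_S,(3)}(A), where R_p^{(1)}(A) := Σ_{l,k∈N} |a_{plk}|, R_q^{Δ_S,(3)}(A) := Σ_{(l,k)∈Δ_S} |a_{lkq}| and R_q^{Δ̄_S,(3)}(A) := Σ_{(l,k)∈Δ̄_S} |a_{lkq}|. -/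

import Mathlib

open Finset

/-- `λ` is a C-eigenvalue of the piezoelectric-type tensor `a` with left C-eigenvector `x`
and right C-eigenvector `y`:
`A y y = λ x`, `x A y = λ y`, `xᵀ x = 1`, `yᵀ y = 1`. -/
def CEig {n : ℕ} (a : Fin n → Fin n → Fin n → ℝ) (lam : ℝ) (x y : Fin n → ℝ) : Prop :=
  (∀ i, ∑ j, ∑ k, a i j k * y j * y k = lam * x i) ∧
  (∀ i, ∑ j, ∑ k, a j k i * x j * y k = lam * y i) ∧
  (∑ i, x i * x i = 1) ∧ (∑ i, y i * y i = 1)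

/-- `R_i^{(1)}(A) = ∑_{l,k} |a_{ilk}|`. -/
noncomputable def R1 {n : ℕ} (a : Fin n → Fin n → Fin n → ℝ) (i : Fin n) : ℝ :=
  ∑ l, ∑ k, |a i l k|

/-- `R_j^{(3)}(A) = ∑_{l,k} |a_{lkj}|`. -/
noncomputable def R3 {n : ℕ} (a : Fin n → Fin n → Fin n → ℝ) (j : Fin n) : ℝ :=
  ∑ l, ∑ k, |a l k j|

/-- `R_j^{Δ_S,(3)}(A) = ∑_{(l,k) : l ∈ S or k ∈ S} |a_{lkj}|`. -/
noncomputable def R3D {n : ℕ} (a : Fin n → Fin n → Fin n → ℝ) (S : Finset (Fin n))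
    (j : Fin n) : ℝ :=
  ∑ l, ∑ k, if l ∈ S ∨ k ∈ S then |a l k j| else 0

/-- `R_j^{Δ̄_S,(3)}(A) = ∑_{(l,k) : l ∉ S and k ∉ S} |a_{lkj}|`. -/
noncomputable def R3Dbar {n : ℕ} (a : Fin n → Fin n → Fin n → ℝ) (S : Finset (Fin n))
    (j : Fin n) : ℝ :=
  ∑ l, ∑ k, if l ∉ S ∧ k ∉ S then |a l k j| else 0

/-
Write `r` and `s` for the sums of `|a_{lkq}|` over `Δ` and over its complement. Evaluating
`A y y = λ x` at `p` and bounding the entries of `y` by `1` gives `|λ| |x_p| ≤ R_p^{(1)}`.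
Evaluating `x A y = λ y` at `q`, bounding the entries of `x` and `y` by `|x_p|` and `|y_q|` and
cancelling `|y_q| > 0` gives `|λ| ≤ (r + s) |x_p| ≤ r + s |x_p|`, that is, `|λ| - r ≤ s |x_p|`.
Multiplying this by `|λ|` and inserting the first bound yields `|λ| (|λ| - r) ≤ R_p^{(1)} s`.
-/

section

variable {ι κ R : Type*} [Fintype ι] [Fintype κ] [CommRing R]

/-- The C-eigenvalue equations for a third-order tensor whose first mode is indexed by `ι` and whose
other two modes are indexed by `κ`: `lam` is a C-eigenvalue with left C-eigenvector `x` and right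
C-eigenvector `y`. For `ι = κ = Fin n` and `R = ℝ` this is `CEig`. -/
structure IsCEigentriple (a : ι → κ → κ → R) (lam : R) (x : ι → R) (y : κ → R) : Prop where
  left_eq : ∀ i, ∑ j, ∑ k, a i j k * y j * y k = lam * x i
  right_eq : ∀ k, ∑ i, ∑ j, a i j k * x i * y j = lam * y k
  left_unit : ∑ i, x i * x i = 1
  right_unit : ∑ j, y j * y j = 1

variable [LinearOrder R] [IsStrictOrderedRing R]

theorem abs_le_one_of_sum_mul_self_eq_one {z : ι → R} (hz : ∑ i, z i * z i = 1) (i : ι) :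
    |z i| ≤ 1 := by
  rw [abs_le_one_iff_mul_self_le_one, ← hz]
  exact single_le_sum (f := fun i ↦ z i * z i) (fun j _ ↦ mul_self_nonneg (z j)) (mem_univ i)

theorem abs_pos_of_sum_mul_self_eq_one {z : ι → R} (hz : ∑ i, z i * z i = 1) {q : ι}
    (hq : ∀ i, |z i| ≤ |z q|) : 0 < |z q| := by
  by_contra! hzq
  have z_eq_zero : ∀ i, z i = 0 := fun i ↦ abs_nonpos_iff.mp ((hq i).trans hzq)
  simp [z_eq_zero] at hz

theorem abs_sum_sum_mul_mul_le (b : ι → κ → R) {u : ι → R} {v : κ → R} {c d : R}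
    (hu : ∀ i, |u i| ≤ c) (hv : ∀ j, |v j| ≤ d) :
    |∑ i, ∑ j, b i j * u i * v j| ≤ (∑ i, ∑ j, |b i j|) * c * d := by
  simp only [sum_mul]
  refine (abs_sum_le_sum_abs _ _).trans (sum_le_sum fun i _ ↦ ?_)
  refine (abs_sum_le_sum_abs _ _).trans (sum_le_sum fun j _ ↦ ?_)
  have c_nonneg : 0 ≤ c := (abs_nonneg _).trans (hu i)
  rw [abs_mul, abs_mul]
  gcongr
  exacts [hu i, hv j]

namespace IsCEigentriple

variable {a : ι → κ → κ → R} {lam : R} {x : ι → R} {y : κ → R}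

theorem abs_mul_abs_left_le (h : IsCEigentriple a lam x y) (p : ι) :
    |lam| * |x p| ≤ ∑ j, ∑ k, |a p j k| := by
  have y_le_one := abs_le_one_of_sum_mul_self_eq_one h.right_unit
  simpa only [h.left_eq, abs_mul, mul_one] using abs_sum_sum_mul_mul_le (a p) y_le_one y_le_one

theorem abs_le_sum_mul_abs_left (h : IsCEigentriple a lam x y) {p : ι} {q : κ}
    (hp : ∀ i, |x i| ≤ |x p|) (hq : ∀ j, |y j| ≤ |y q|) :
    |lam| ≤ (∑ i, ∑ j, |a i j q|) * |x p| := by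
  refine le_of_mul_le_mul_right ?_ (abs_pos_of_sum_mul_self_eq_one h.right_unit hq)
  simpa only [h.right_eq, abs_mul] using abs_sum_sum_mul_mul_le (fun i j ↦ a i j q) hp hq

end IsCEigentriple

theorem stmt13_general [DecidableEq ι] [DecidableEq κ] {a : ι → κ → κ → R} {lam : R} {x : ι → R}
    {y : κ → R} (h : IsCEigentriple a lam x y) (Δ : Finset (ι × κ)) {p : ι} {q : κ}
    (hp : ∀ i, |x i| ≤ |x p|) (hq : ∀ j, |y j| ≤ |y q|) :
    |lam| * (|lam| - ∑ t ∈ Δ, |a t.1 t.2 q|) ≤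
      (∑ j, ∑ k, |a p j k|) * ∑ t ∈ Δᶜ, |a t.1 t.2 q| := by
  set r := ∑ t ∈ Δ, |a t.1 t.2 q|
  set s := ∑ t ∈ Δᶜ, |a t.1 t.2 q|
  have r_nonneg : 0 ≤ r := sum_nonneg fun _ _ ↦ abs_nonneg _
  have s_nonneg : 0 ≤ s := sum_nonneg fun _ _ ↦ abs_nonneg _
  have split : ∑ i, ∑ j, |a i j q| = r + s := by
    rw [sum_add_sum_compl, Fintype.sum_prod_type]
  have lam_sub_le : |lam| - r ≤ s * |x p| := by
    have lam_le : |lam| ≤ (r + s) * |x p| := split ▸ h.abs_le_sum_mul_abs_left hp hq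
    have r_mul_le : r * |x p| ≤ r :=
      mul_le_of_le_one_right r_nonneg (abs_le_one_of_sum_mul_self_eq_one h.left_unit p)
    linarith
  calc |lam| * (|lam| - r) ≤ |lam| * (s * |x p|) := by gcongr
    _ = |lam| * |x p| * s := by ring
    _ ≤ (∑ j, ∑ k, |a p j k|) * s :=
      mul_le_mul_of_nonneg_right (h.abs_mul_abs_left_le p) s_nonneg

/-- The index set `Δ_S` of pairs having at least one component in `S`; its complement is `Δ̄_S`. -/
def pairsMeeting [DecidableEq ι] (S : Finset ι) : Finset (ι × ι) :=
  {t | t.1 ∈ S ∨ t.2 ∈ S}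

end

section

variable {n : ℕ} {a : Fin n → Fin n → Fin n → ℝ}

theorem CEig.isCEigentriple {lam : ℝ} {x y : Fin n → ℝ} (h : CEig a lam x y) :
    IsCEigentriple a lam x y :=
  ⟨h.1, h.2.1, h.2.2.1, h.2.2.2⟩

theorem R3D_eq_sum_pairsMeeting (S : Finset (Fin n)) (j : Fin n) :
    R3D a S j = ∑ t ∈ pairsMeeting S, |a t.1 t.2 j| := by
  rw [pairsMeeting, sum_filter, Fintype.sum_prod_type, R3D]

theorem R3Dbar_eq_sum_compl_pairsMeeting (S : Finset (Fin n)) (j : Fin n) :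
    R3Dbar a S j = ∑ t ∈ (pairsMeeting S)ᶜ, |a t.1 t.2 j| := by
  simp only [pairsMeeting, compl_filter, not_or, sum_filter, Fintype.sum_prod_type, R3Dbar]

end

/-- Inequality (2.8): `|λ| (|λ| - R_q^{Δ_S,(3)}(A)) ≤ R_p^{(1)}(A) R_q^{Δ̄_S,(3)}(A)`. -/
theorem stmt13 {n : ℕ} (a : Fin n → Fin n → Fin n → ℝ)
    (hA : ∀ i j k, a i j k = a i k j)
    (lam : ℝ) (x y : Fin n → ℝ) (h : CEig a lam x y)
    (S : Finset (Fin n))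
    (p q : Fin n) (hp : ∀ i, |x i| ≤ |x p|) (hq : ∀ i, |y i| ≤ |y q|) :
    |lam| * (|lam| - R3D a S q) ≤ R1 a p * R3Dbar a S q := by
  rw [R3D_eq_sum_pairsMeeting, R3Dbar_eq_sum_compl_pairsMeeting]
  exact stmt13_general h.isCEigentriple (pairsMeeting S) hp hq
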